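/- arXiv:2102.07972 — 3 statements merged into one kernel-verified Lean document; each statement's English description precedes it below -/
import Mathlib

section
/- Error-feedback memory bound: under the stated recursion and compression assumption, for every t ≥ 0 one has E[‖r_t‖²] ≤ (4(1−δ)/δ²) γ² G². -/
open MeasureTheory

/-!
Young's inequality with parameter `δ / 2` and the contraction property give the recursion
`E‖r_{t+1}‖² ≤ (1 - δ) ((1 + 2/δ) γ² G² + (1 + δ/2) E‖r_t‖²)`. The bound
`B = 4 (1 - δ) / δ² γ² G²` is preserved by it, because
`δ² + 2 δ + 4 (1 - δ) (1 + δ/2) = 4 - δ² ≤ 4`; induction on `t` concludes.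
-/

/-- Young's inequality for the squared norm of a sum, with parameter `δ / 2`. -/
lemma norm_add_sq_le_young {E : Type*} [SeminormedAddCommGroup E] {δ : ℝ} (hδ : 0 < δ)
    (a b : E) : ‖a + b‖ ^ 2 ≤ (1 + 2 / δ) * ‖a‖ ^ 2 + (1 + δ / 2) * ‖b‖ ^ 2 := by
  have h : ‖a + b‖ ^ 2 ≤ (‖a‖ + ‖b‖) ^ 2 := by
    gcongr
    exact norm_add_le a b
  have key : (1 + 2 / δ) * ‖a‖ ^ 2 + (1 + δ / 2) * ‖b‖ ^ 2 - (‖a‖ + ‖b‖) ^ 2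
      = 2 / δ * (‖a‖ - δ / 2 * ‖b‖) ^ 2 := by
    field_simp
    ring
  have : 0 ≤ 2 / δ * (‖a‖ - δ / 2 * ‖b‖) ^ 2 := by positivity
  linarith


/-- Error-feedback memory bound: let `γ > 0`, `G > 0`, `δ ∈ (0,1]`, let `(g_t)` be random
vectors with `E[‖g_t‖²] ≤ G²`, and let the memory sequence be `r_0 = 0`,
`u_t = γ g_t + r_t`, `r_{t+1} = u_t − C_t(u_t)`, where the (possibly random) compression
operator satisfies the mean contraction property
`E[‖u_t − C_t(u_t)‖²] ≤ (1−δ)·E[‖u_t‖²]` (here `Cu t ω = C_t(u_t)(ω)`). Then for every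
`t ≥ 0`, `E[‖r_t‖²] ≤ (4(1−δ)/δ²) γ² G²`. -/
theorem error_feedback_memory_bound {Ω : Type*} {mΩ : MeasurableSpace Ω}
    {μ : Measure Ω} [IsProbabilityMeasure μ] {d : ℕ}
    (γ G δ : ℝ) (hγ : 0 < γ) (hG : 0 < G) (hδ0 : 0 < δ) (hδ1 : δ ≤ 1)
    (g u r Cu : ℕ → Ω → EuclideanSpace ℝ (Fin d))
    (hg2int : ∀ t, Integrable (fun ω => ‖g t ω‖ ^ 2) μ)
    (hu2int : ∀ t, Integrable (fun ω => ‖u t ω‖ ^ 2) μ)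
    (hr2int : ∀ t, Integrable (fun ω => ‖r t ω‖ ^ 2) μ)
    (hg2 : ∀ t, ∫ ω, ‖g t ω‖ ^ 2 ∂μ ≤ G ^ 2)
    (hr0 : ∀ ω, r 0 ω = 0)
    (hu : ∀ t ω, u t ω = γ • g t ω + r t ω)
    (hrrec : ∀ t ω, r (t + 1) ω = u t ω - Cu t ω)
    (hcontract : ∀ t, ∫ ω, ‖u t ω - Cu t ω‖ ^ 2 ∂μ ≤ (1 - δ) * ∫ ω, ‖u t ω‖ ^ 2 ∂μ) :
    ∀ t, ∫ ω, ‖r t ω‖ ^ 2 ∂μ ≤ 4 * (1 - δ) / δ ^ 2 * γ ^ 2 * G ^ 2 := by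
  intro t
  have h1δ : 0 ≤ 1 - δ := by linarith
  induction t with
  | zero =>
    simp only [hr0, norm_zero, ne_eq, OfNat.ofNat_ne_zero, not_false_eq_true, zero_pow,
      integral_zero]
    positivity
  | succ t ih =>
    have hU : ∫ ω, ‖u t ω‖ ^ 2 ∂μ ≤
        (1 + 2 / δ) * (γ ^ 2 * ∫ ω, ‖g t ω‖ ^ 2 ∂μ) + (1 + δ / 2) * ∫ ω, ‖r t ω‖ ^ 2 ∂μ := by
      have hi1 := ((hg2int t).const_mul (γ ^ 2)).const_mul (1 + 2 / δ)
      have hi2 := (hr2int t).const_mul (1 + δ / 2)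
      rw [← integral_const_mul, ← integral_const_mul, ← integral_const_mul,
        ← integral_add hi1 hi2]
      refine integral_mono (hu2int t) (hi1.add hi2) fun ω => ?_
      have h := norm_add_sq_le_young hδ0 (γ • g t ω) (r t ω)
      rw [norm_smul, mul_pow, Real.norm_eq_abs, sq_abs, ← hu] at h
      exact h
    calc ∫ ω, ‖r (t + 1) ω‖ ^ 2 ∂μ = ∫ ω, ‖u t ω - Cu t ω‖ ^ 2 ∂μ := by simp only [hrrec]
      _ ≤ (1 - δ) * ∫ ω, ‖u t ω‖ ^ 2 ∂μ := hcontract t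
      _ ≤ (1 - δ) * ((1 + 2 / δ) * (γ ^ 2 * G ^ 2)
            + (1 + δ / 2) * (4 * (1 - δ) / δ ^ 2 * γ ^ 2 * G ^ 2)) := by
          refine mul_le_mul_of_nonneg_left (hU.trans ?_) h1δ
          gcongr
          exact hg2 t
      -- the excess of the invariant bound over the recursion is exactly this subtracted term
      _ = 4 * (1 - δ) / δ ^ 2 * γ ^ 2 * G ^ 2 - (1 - δ) * (γ ^ 2 * G ^ 2) := by
          field_simp
          ring
      _ ≤ 4 * (1 - δ) / δ ^ 2 * γ ^ 2 * G ^ 2 := by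
          have : 0 ≤ (1 - δ) * (γ ^ 2 * G ^ 2) := by positivity
          linarith
end

section
/- Single-user water-filling (Theorem 2): suppose λ > 0 satisfies Σ_{k=1}^K max{ (1/√λ)·√(x_k² σ²/h_k²) − σ²/h_k², 0 } = E. Define b_k* ≥ 0 by (b_k*)² = max{ √(σ²/(λ x_k² h_k²)) − σ²/(h_k² x_k²), 0 } and α_k* = b_k* h_k x_k² / (σ² + (b_k*)² h_k² x_k²). Then (b*, α*) is optimal for P2: for all b_k ≥ 0 and α_k ≥ 0 with Σ_{k=1}^K b_k² x_k² ≤ E, Σ_{k=1}^K ((α_k* b_k* h_k − 1) x_k)² + σ² Σ_{k=1}^K (α_k*)² ≤ Σ_{k=1}^K ((α_k b_k h_k − 1) x_k)² + σ² Σ_{k=1}^K α_k², and b* is feasible (Σ (b_k*)² x_k² ≤ E). -/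
/-!
For fixed power coefficients the objective separates into quadratics in `α k`. Completing the
square (`mse_eq`) shows that each is minimised by the Wiener coefficient, with minimal value
`x² σ² / D`, where `D = σ² + b² h² x²` is the received second moment.

What remains is a convex problem in the powers `b² x²`, solved by Lagrangian duality with
multiplier `lam`. Up to an additive constant, the Lagrangian of one coordinate is
`(lam / h²) (c² / D + D)` with `c = h |x| σ / √lam`. Over `D ≥ σ²` the function `c² / D + D` is
minimised at `D = max c σ²` (`div_add_self_min`), which is exactly the value produced by the
water-filling powers (`lagrangian_le`). The water-level equation says that these powers spend the
whole budget, so summing the Lagrangian inequalities gives optimality.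
-/

open Finset

/-- Completing the square in the estimator coefficient `a`. -/
lemma mse_eq (a b h x σ : ℝ) (hσ : 0 < σ) :
    ((a * b * h - 1) * x) ^ 2 + σ ^ 2 * a ^ 2
      = x ^ 2 * σ ^ 2 / (σ ^ 2 + b ^ 2 * h ^ 2 * x ^ 2)
        + (σ ^ 2 + b ^ 2 * h ^ 2 * x ^ 2)
          * (a - b * h * x ^ 2 / (σ ^ 2 + b ^ 2 * h ^ 2 * x ^ 2)) ^ 2 := by
  have hD : σ ^ 2 + b ^ 2 * h ^ 2 * x ^ 2 ≠ 0 := by positivity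
  field_simp
  ring

/-- The function `D ↦ c² / D + D` on `[t, ∞)` is minimised at `max c t`: its unconstrained
minimiser is `c`, and it is increasing beyond `c`. -/
lemma div_add_self_min {c t D : ℝ} (hc : 0 < c) (ht : 0 < t) (hD : t ≤ D) :
    c ^ 2 / max c t + max c t ≤ c ^ 2 / D + D := by
  have hD0 : 0 < D := ht.trans_le hD
  rcases le_total t c with hct | hct
  · rw [max_eq_left hct]
    have key : c ^ 2 / D + D - (c ^ 2 / c + c) = (c - D) ^ 2 / D := by
      field_simp
      ring
    have : 0 ≤ (c - D) ^ 2 / D := by positivity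
    linarith
  · rw [max_eq_right hct]
    have key : c ^ 2 / D + D - (c ^ 2 / t + t) = (D - t) * (t * D - c ^ 2) / (t * D) := by
      field_simp
      ring
    have h1 : c ^ 2 ≤ t * D := by nlinarith
    have : 0 ≤ (D - t) * (t * D - c ^ 2) / (t * D) :=
      div_nonneg (mul_nonneg (by linarith) (by linarith)) (by positivity)
    linarith

/-- The squared water-filling coefficient, with the inner square root evaluated. -/
lemma sq_waterfilling {h x σ lam : ℝ} (hh : 0 < h) (hσ : 0 < σ) (hlam : 0 < lam) :
    Real.sqrt (max (Real.sqrt (σ ^ 2 / (lam * x ^ 2 * h ^ 2)) - σ ^ 2 / (h ^ 2 * x ^ 2)) 0) ^ 2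
      = max (σ / (Real.sqrt lam * |x| * h) - σ ^ 2 / (h ^ 2 * |x| ^ 2)) 0 := by
  rw [Real.sq_sqrt (le_max_right _ _), Real.sqrt_div (by positivity), Real.sqrt_sq hσ.le,
    Real.sqrt_mul (by positivity), Real.sqrt_mul hlam.le, Real.sqrt_sq hh.le,
    Real.sqrt_sq_eq_abs, sq_abs]

/-- The transmit power of the water-filling coefficient is the summand of the water-level
equation. -/
lemma power_eq {h x σ lam : ℝ} (hh : 0 < h) (hx : x ≠ 0) (hσ : 0 < σ) (hlam : 0 < lam) :
    max (σ / (Real.sqrt lam * |x| * h) - σ ^ 2 / (h ^ 2 * |x| ^ 2)) 0 * x ^ 2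
      = max ((1 / Real.sqrt lam) * Real.sqrt (x ^ 2 * σ ^ 2 / h ^ 2) - σ ^ 2 / h ^ 2) 0 := by
  have ha : 0 < |x| := abs_pos.mpr hx
  have hs : 0 < Real.sqrt lam := Real.sqrt_pos.mpr hlam
  rw [Real.sqrt_div (by positivity), Real.sqrt_mul (by positivity), Real.sqrt_sq hσ.le,
    Real.sqrt_sq hh.le, Real.sqrt_sq_eq_abs, ← sq_abs x, max_mul_of_nonneg _ _ (by positivity),
    zero_mul]
  congr 1
  field_simp

/-- The water-filling coefficient minimises the one-coordinate Lagrangian, whose MSE term is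
already minimised over the estimator. -/
lemma lagrangian_le {h x σ lam b₀ : ℝ} (b : ℝ) (hh : 0 < h) (hx : x ≠ 0) (hσ : 0 < σ)
    (hlam : 0 < lam)
    (hb₀ : b₀ ^ 2 = max (σ / (Real.sqrt lam * |x| * h) - σ ^ 2 / (h ^ 2 * |x| ^ 2)) 0) :
    x ^ 2 * σ ^ 2 / (σ ^ 2 + b₀ ^ 2 * h ^ 2 * x ^ 2) + lam * (b₀ ^ 2 * x ^ 2)
      ≤ x ^ 2 * σ ^ 2 / (σ ^ 2 + b ^ 2 * h ^ 2 * x ^ 2) + lam * (b ^ 2 * x ^ 2) := by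
  have ha : 0 < |x| := abs_pos.mpr hx
  have hs : 0 < Real.sqrt lam := Real.sqrt_pos.mpr hlam
  have hs2 : Real.sqrt lam ^ 2 = lam := Real.sq_sqrt hlam.le
  have hD₀ : σ ^ 2 + b₀ ^ 2 * h ^ 2 * x ^ 2 = max (h * |x| * σ / Real.sqrt lam) (σ ^ 2) := by
    rw [hb₀, ← sq_abs x, mul_assoc, max_mul_of_nonneg _ _ (by positivity), zero_mul,
      ← max_add_add_left, add_zero]
    congr 1
    field_simp
    ring
  -- The Lagrangian as a function of the received second moment.
  have hL : ∀ β : ℝ, x ^ 2 * σ ^ 2 / (σ ^ 2 + β ^ 2 * h ^ 2 * x ^ 2) + lam * (β ^ 2 * x ^ 2)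
      = lam / h ^ 2 * ((h * |x| * σ / Real.sqrt lam) ^ 2 / (σ ^ 2 + β ^ 2 * h ^ 2 * x ^ 2)
          + (σ ^ 2 + β ^ 2 * h ^ 2 * x ^ 2)) - lam * σ ^ 2 / h ^ 2 := by
    intro β
    have hD : σ ^ 2 + β ^ 2 * h ^ 2 * x ^ 2 ≠ 0 := by positivity
    rw [div_pow, hs2, mul_pow, mul_pow, sq_abs]
    field_simp
    ring
  have hmin := div_add_self_min (c := h * |x| * σ / Real.sqrt lam) (t := σ ^ 2)
    (D := σ ^ 2 + b ^ 2 * h ^ 2 * x ^ 2) (by positivity) (by positivity)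
    (le_add_of_nonneg_right (by positivity))
  rw [hL, hL, hD₀]
  gcongr

/-- Single-user water-filling (Theorem 2 of the paper): given channel gains `h_k > 0`,
nonzero gradient coordinates `x_k ≠ 0`, noise standard deviation `σ > 0` and power
budget `E > 0`, suppose the water level `λ > 0` satisfies
`Σ_k max{ (1/√λ)·√(x_k²σ²/h_k²) − σ²/h_k², 0 } = E`. Define `b_k* ≥ 0` by
`(b_k*)² = max{ √(σ²/(λ x_k² h_k²)) − σ²/(h_k² x_k²), 0 }` and
`α_k* = b_k* h_k x_k² / (σ² + (b_k*)² h_k² x_k²)`. Then `(b*, α*)` is feasible and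
optimal for the single-user MSE minimization problem P2. -/
theorem single_user_waterfilling {K : ℕ} (hK : 1 ≤ K)
    (h x : Fin K → ℝ) (hh : ∀ k, 0 < h k) (hx : ∀ k, x k ≠ 0)
    (σ E lam : ℝ) (hσ : 0 < σ) (hE : 0 < E) (hlam : 0 < lam)
    (hwater : ∑ k, max ((1 / Real.sqrt lam) * Real.sqrt ((x k) ^ 2 * σ ^ 2 / (h k) ^ 2)
        - σ ^ 2 / (h k) ^ 2) 0 = E)
    (bstar αstar : Fin K → ℝ)
    (hbstar : ∀ k, bstar k
      = Real.sqrt (max (Real.sqrt (σ ^ 2 / (lam * (x k) ^ 2 * (h k) ^ 2))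
          - σ ^ 2 / ((h k) ^ 2 * (x k) ^ 2)) 0))
    (hαstar : ∀ k, αstar k
      = bstar k * h k * (x k) ^ 2 / (σ ^ 2 + (bstar k) ^ 2 * (h k) ^ 2 * (x k) ^ 2)) :
    (∑ k, (bstar k) ^ 2 * (x k) ^ 2 ≤ E)
    ∧ ∀ b α : Fin K → ℝ, (∀ k, 0 ≤ b k) → (∀ k, 0 ≤ α k) →
        ∑ k, (b k) ^ 2 * (x k) ^ 2 ≤ E →
        ∑ k, ((αstar k * bstar k * h k - 1) * x k) ^ 2 + σ ^ 2 * ∑ k, (αstar k) ^ 2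
          ≤ ∑ k, ((α k * b k * h k - 1) * x k) ^ 2 + σ ^ 2 * ∑ k, (α k) ^ 2 := by
  have hb2 : ∀ k, bstar k ^ 2 = max (σ / (Real.sqrt lam * |x k| * h k)
      - σ ^ 2 / (h k ^ 2 * |x k| ^ 2)) 0 := fun k => by
    rw [hbstar k, sq_waterfilling (hh k) hσ hlam]
  have hpow : ∑ k, bstar k ^ 2 * x k ^ 2 = E := by
    rw [← hwater]
    exact Finset.sum_congr rfl fun k _ => by rw [hb2 k, power_eq (hh k) (hx k) hσ hlam]
  refine ⟨hpow.le, fun b α _ _ hbE => ?_⟩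
  have hcoord : ∀ k, ((αstar k * bstar k * h k - 1) * x k) ^ 2 + σ ^ 2 * αstar k ^ 2
        + lam * (bstar k ^ 2 * x k ^ 2)
      ≤ ((α k * b k * h k - 1) * x k) ^ 2 + σ ^ 2 * α k ^ 2 + lam * (b k ^ 2 * x k ^ 2) := by
    intro k
    have hlag := lagrangian_le (b k) (hh k) (hx k) hσ hlam (hb2 k)
    rw [mse_eq _ _ _ _ _ hσ, mse_eq (α k) _ _ _ _ hσ, ← hαstar k, sub_self]
    have : 0 ≤ (σ ^ 2 + b k ^ 2 * h k ^ 2 * x k ^ 2)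
        * (α k - b k * h k * x k ^ 2 / (σ ^ 2 + b k ^ 2 * h k ^ 2 * x k ^ 2)) ^ 2 := by
      positivity
    linarith
  have hsum := Finset.sum_le_sum fun k (_ : k ∈ Finset.univ) => hcoord k
  simp only [Finset.sum_add_distrib, ← Finset.mul_sum] at hsum
  rw [hpow] at hsum
  have := mul_le_mul_of_nonneg_left hbE hlam.le
  linarith
end

section
/- Water-filling optimality for the reduced convex problem P2-1: let h̃_k > 0, x̃_k > 0 (k = 1,…,K), E > 0, and λ > 0, and define b̃_k* = max{ √(h̃_k x̃_k/λ) − x̃_k, 0 } / h̃_k. If Σ_{k=1}^K b̃_k*/x̃_k = E, then b̃* minimizes Σ_{k=1}^K 1/(b̃_k h̃_k + x̃_k) over all b̃_k ≥ 0 satisfying Σ_{k=1}^K b̃_k/x̃_k ≤ E. -/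
open Finset

/-!
Lagrangian sufficiency. With multiplier `lam`, the Lagrangian `∑ 1/(b h + x) + lam ∑ b/x` splits
over the coordinates. In terms of the water level `s = b h + x ≥ x` each summand is, up to a
constant, `1/s + c s` with `c = lam/(h x)`, which is minimized over `s ≥ x` at `max (1/√c) x`; this
is the level of `bstar` (`waterfilling_coord`). Summing over the coordinates, and using that `bstar`
exhausts the budget while `b` respects it, yields the inequality between the objectives.
-/

/-- Over `s ≥ x`, the convex function `s ↦ 1/s + c s` is minimized at its unconstrained minimizer
`r = 1/√c` clamped to `[x, ∞)`. -/
lemma one_div_add_mul_min {c r x s : ℝ} (hr : 0 < r) (hx : 0 < x) (hc : c * r ^ 2 = 1)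
    (hs : x ≤ s) : 1 / max r x + c * max r x ≤ 1 / s + c * s := by
  have hs0 : 0 < s := hx.trans_le hs
  have hc0 : 0 < c := by
    by_contra! h
    nlinarith [sq_nonneg r]
  have ht0 : 0 < max r x := lt_max_of_lt_left hr
  have key : 0 ≤ (s - max r x) * (c * s * max r x - 1) := by
    rcases le_total x r with h | h
    · rw [max_eq_left h]
      have : (s - r) * (c * s * r - 1) = c * r * (s - r) ^ 2 := by
        linear_combination (s - r) * hc
      rw [this]
      positivity
    · rw [max_eq_right h]
      have h1 : r ^ 2 ≤ s * x := by nlinarith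
      have h2 : c * r ^ 2 ≤ c * (s * x) := mul_le_mul_of_nonneg_left h1 hc0.le
      exact mul_nonneg (by linarith) (by linarith)
  have e : 1 / s + c * s - (1 / max r x + c * max r x)
      = (s - max r x) * (c * s * max r x - 1) / (s * max r x) := by
    field_simp
    ring
  have : 0 ≤ (s - max r x) * (c * s * max r x - 1) / (s * max r x) := by positivity
  linarith

/-- The water-filling allocation minimizes each coordinate's term of the Lagrangian. -/
lemma waterfilling_coord {h x l b bs : ℝ} (hh : 0 < h) (hx : 0 < x) (hl : 0 < l) (hb : 0 ≤ b)
    (hbs : bs = max (Real.sqrt (h * x / l) - x) 0 / h) :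
    1 / (bs * h + x) + l * (bs / x) ≤ 1 / (b * h + x) + l * (b / x) := by
  have hpos : 0 < h * x / l := by positivity
  have hlevel : bs * h + x = max (Real.sqrt (h * x / l)) x := by
    rw [hbs, div_mul_cancel₀ _ hh.ne', max_add]
    simp
  have hc : l / (h * x) * Real.sqrt (h * x / l) ^ 2 = 1 := by
    rw [Real.sq_sqrt hpos.le]
    field_simp
  have hs : x ≤ b * h + x := by nlinarith [mul_nonneg hb hh.le]
  have key := one_div_add_mul_min (Real.sqrt_pos.2 hpos) hx hc hs
  rw [← hlevel] at key
  have e : ∀ y : ℝ, l * (y / x) = l / (h * x) * (y * h + x) - l / h := by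
    intro y
    field_simp
    ring
  rw [e bs, e b]
  linarith

/-- Water-filling optimality for the reduced convex problem P2-1 (obtained from the
single-user problem P2 by the substitution `b̃_k = b_k²`, `h̃_k = h_k²/σ²`,
`x̃_k = 1/x_k²`): let `h̃_k > 0`, `x̃_k > 0`, `E > 0`, `λ > 0`, and define
`b̃_k* = max{ √(h̃_k x̃_k/λ) − x̃_k, 0 } / h̃_k`. If `Σ b̃_k*/x̃_k = E`, then `b̃*`
minimizes `Σ 1/(b̃_k h̃_k + x̃_k)` over all `b̃_k ≥ 0` with `Σ b̃_k/x̃_k ≤ E`. -/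
theorem waterfilling_reduced_problem {K : ℕ} (hK : 1 ≤ K)
    (ht hx : Fin K → ℝ) (hht : ∀ k, 0 < ht k) (hhx : ∀ k, 0 < hx k)
    (E lam : ℝ) (hE : 0 < E) (hlam : 0 < lam)
    (bstar : Fin K → ℝ)
    (hbstar : ∀ k, bstar k = max (Real.sqrt (ht k * hx k / lam) - hx k) 0 / ht k)
    (hsat : ∑ k, bstar k / hx k = E) :
    ∀ b : Fin K → ℝ, (∀ k, 0 ≤ b k) → ∑ k, b k / hx k ≤ E →
      ∑ k, 1 / (bstar k * ht k + hx k) ≤ ∑ k, 1 / (b k * ht k + hx k) := by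
  intro b hb hbE
  have key := Finset.sum_le_sum fun k (_ : k ∈ Finset.univ) =>
    waterfilling_coord (hht k) (hhx k) hlam (hb k) (hbstar k)
  rw [Finset.sum_add_distrib, Finset.sum_add_distrib, ← Finset.mul_sum, ← Finset.mul_sum,
    hsat] at key
  have := mul_le_mul_of_nonneg_left hbE hlam.le
  linarith
end
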